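/- For any two policies π and π′ and any initial state distribution μ over S, ∥d^{π′}_μ − d^π_μ∥₁ ≤ (γ/(1−γ))·∥π′ − π∥_{∞,1}, where ∥·∥₁ is the total-variation (ℓ₁) norm on ℝ^S. -/

import Mathlib

/-!
The visitation distribution `x = d^π_μ` is the fixed point of the balance equation
`x = (1 - γ) μ + γ P^π x` (`visitDist_balance`), and it is a probability distribution
(`visitDist_isDist`). Subtracting the equations of `π'` and `π`, the difference `Δ = x' - x` satisfies
`Δ = γ P^{π'} Δ + γ (P^{π'} - P^π) x`. A kernel weighted by `w` maps `d` to a vector of `ℓ₁` norm at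
most `∑ₛ |d s| ∑ₐ |w s a|` (`normL1_markovStep_le`); applied with `w = π'`, `d = Δ` and with
`w = π' - π`, `d = x` this gives `∥Δ∥₁ ≤ γ ∥Δ∥₁ + γ ∥π' - π∥_{∞,1}`, which rearranges to the claim.
-/

open Finset

noncomputable section

/-- `π` is a stochastic policy: `π s` is a probability distribution over actions. -/
def IsPolicy {S A : Type*} [Fintype A] (π : S → A → ℝ) : Prop :=
  (∀ s a, 0 ≤ π s a) ∧ ∀ s, ∑ a, π s a = 1

/-- `P` is a transition probability model: `P s a` is a distribution over next states. -/
def IsKernel {S A : Type*} [Fintype S] (P : S → A → S → ℝ) : Prop :=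
  (∀ s a s', 0 ≤ P s a s') ∧ ∀ s a, ∑ s', P s a s' = 1

/-- `d` is a probability distribution over states. -/
def IsDist {S : Type*} [Fintype S] (d : S → ℝ) : Prop :=
  (∀ s, 0 ≤ d s) ∧ ∑ s, d s = 1

/-- The Markov operator `P^π` induced by policy `π` acting on distributions over states:
`(P^π d)(s') = ∑_s ∑_a P(s'|s,a)·π(a|s)·d(s)`. -/
def markovStep {S A : Type*} [Fintype S] [Fintype A] (P : S → A → S → ℝ)
    (π : S → A → ℝ) (d : S → ℝ) : S → ℝ :=
  fun s' => ∑ s, ∑ a, P s a s' * π s a * d s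

/-- The discounted state-visitation distribution
`d^π_μ(s) = (1−γ) ∑_{t≥0} γ^t Pr(s_t = s | π, s₀ ∼ μ)`. -/
def visitDist {S A : Type*} [Fintype S] [Fintype A] (P : S → A → S → ℝ) (γ : ℝ)
    (π : S → A → ℝ) (μ : S → ℝ) : S → ℝ :=
  fun s => (1 - γ) * ∑' t : ℕ, γ ^ t * ((markovStep P π)^[t] μ) s

/-- The value function `V^π_μ = E[∑_{t≥0} γ^t r(s_t,a_t)]` with `s₀ ∼ μ`, actions from `π`. -/
def valueV {S A : Type*} [Fintype S] [Fintype A] (P : S → A → S → ℝ) (r : S → A → ℝ)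
    (γ : ℝ) (π : S → A → ℝ) (μ : S → ℝ) : ℝ :=
  ∑' t : ℕ, γ ^ t * ∑ s, ((markovStep P π)^[t] μ) s * ∑ a, π s a * r s a

/-- The state-action value function
`Q^π(s,a) = E[∑_{t≥0} γ^t r(s_t,a_t) | s₀ = s, a₀ = a, actions thereafter from π]`. -/
def valueQ {S A : Type*} [Fintype S] [Fintype A] [DecidableEq S] (P : S → A → S → ℝ)
    (r : S → A → ℝ) (γ : ℝ) (π : S → A → ℝ) (s : S) (a : A) : ℝ :=
  r s a + γ * ∑ s', P s a s' * valueV P r γ π (fun s'' => if s'' = s' then 1 else 0)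

/-- The functional policy gradient `(∇_π V^π_μ)(s,a) = (1/(1−γ))·d^π_μ(s)·Q^π(s,a)`. -/
def gradV {S A : Type*} [Fintype S] [Fintype A] [DecidableEq S] (P : S → A → S → ℝ)
    (r : S → A → ℝ) (γ : ℝ) (π : S → A → ℝ) (μ : S → ℝ) : S → A → ℝ :=
  fun s a => (1 / (1 - γ)) * visitDist P γ π μ s * valueQ P r γ π s a

/-- The pairing `xᵀ y = ∑_{s,a} x(s,a)·y(s,a)` on `ℝ^{S×A}`. -/
def dotSA {S A : Type*} [Fintype S] [Fintype A] (x y : S → A → ℝ) : ℝ :=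
  ∑ s, ∑ a, x s a * y s a

/-- The norm `∥x∥_{∞,1} = max_{s∈S} ∑_{a∈A} |x(s,a)|` on `ℝ^{S×A}`. -/
def normInfOne {S A : Type*} [Fintype S] [Fintype A] [Nonempty S] (x : S → A → ℝ) : ℝ :=
  ⨆ s, ∑ a, |x s a|

/-- The `ℓ₁` (total-variation) norm `∥d∥₁ = ∑_{s∈S} |d s|` on `ℝ^S`. -/
def normL1 {S : Type*} [Fintype S] (d : S → ℝ) : ℝ := ∑ s, |d s|

/-- The weight `w` may be signed: it is used both for a policy and for a difference of policies. -/
lemma normL1_markovStep_le {S A : Type*} [Fintype S] [Fintype A] {P : S → A → S → ℝ}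
    (hP : IsKernel P) (w : S → A → ℝ) (d : S → ℝ) {C : ℝ} (hw : ∀ s, ∑ a, |w s a| ≤ C) :
    normL1 (markovStep P w d) ≤ C * normL1 d := by
  unfold normL1 markovStep
  calc ∑ s', |∑ s, ∑ a, P s a s' * w s a * d s|
      ≤ ∑ s', ∑ s, ∑ a, P s a s' * |w s a| * |d s| := by
        refine sum_le_sum fun s' _ => (abs_sum_le_sum_abs _ _).trans ?_
        refine sum_le_sum fun s _ => (abs_sum_le_sum_abs _ _).trans ?_
        refine sum_le_sum fun a _ => ?_
        rw [abs_mul, abs_mul, abs_of_nonneg (hP.1 s a s')]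
    _ = ∑ s, (∑ a, |w s a|) * |d s| := by
        rw [sum_comm]
        refine sum_congr rfl fun s _ => ?_
        rw [sum_comm, sum_mul]
        refine sum_congr rfl fun a _ => ?_
        simp only [mul_assoc]
        rw [← sum_mul, hP.2, one_mul]
    _ ≤ ∑ s, C * |d s| :=
        sum_le_sum fun s _ => mul_le_mul_of_nonneg_right (hw s) (abs_nonneg _)
    _ = C * ∑ s, |d s| := by rw [mul_sum]

lemma sum_markovStep {S A : Type*} [Fintype S] [Fintype A] {P : S → A → S → ℝ}
    (hP : IsKernel P) {π : S → A → ℝ} (hπ : IsPolicy π) (d : S → ℝ) :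
    ∑ s, markovStep P π d s = ∑ s, d s := by
  unfold markovStep
  rw [sum_comm]
  refine sum_congr rfl fun s _ => ?_
  rw [sum_comm]
  simp only [mul_assoc]
  simp_rw [← sum_mul, hP.2, one_mul]
  rw [← sum_mul, hπ.2, one_mul]

lemma markovStep_isDist {S A : Type*} [Fintype S] [Fintype A] {P : S → A → S → ℝ}
    (hP : IsKernel P) {π : S → A → ℝ} (hπ : IsPolicy π) {d : S → ℝ} (hd : IsDist d) :
    IsDist (markovStep P π d) :=
  ⟨fun s' => sum_nonneg fun s _ => sum_nonneg fun a _ =>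
    mul_nonneg (mul_nonneg (hP.1 s a s') (hπ.1 s a)) (hd.1 s),
    by rw [sum_markovStep hP hπ, hd.2]⟩

lemma iterate_markovStep_isDist {S A : Type*} [Fintype S] [Fintype A] {P : S → A → S → ℝ}
    (hP : IsKernel P) {π : S → A → ℝ} (hπ : IsPolicy π) {μ : S → ℝ} (hμ : IsDist μ) (t : ℕ) :
    IsDist ((markovStep P π)^[t] μ) := by
  induction t with
  | zero => exact hμ
  | succ t ih =>
    rw [Function.iterate_succ_apply']
    exact markovStep_isDist hP hπ ih

lemma summable_visit {S A : Type*} [Fintype S] [Fintype A] {P : S → A → S → ℝ} {γ : ℝ}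
    (hP : IsKernel P) (hγ : γ ∈ Set.Ico (0 : ℝ) 1) {π : S → A → ℝ} (hπ : IsPolicy π)
    {μ : S → ℝ} (hμ : IsDist μ) (s : S) :
    Summable fun t : ℕ => γ ^ t * ((markovStep P π)^[t] μ) s := by
  have hD := fun t => iterate_markovStep_isDist hP hπ hμ t
  refine Summable.of_nonneg_of_le (fun t => mul_nonneg (pow_nonneg hγ.1 t) ((hD t).1 s))
    (fun t => ?_) (summable_geometric_of_lt_one hγ.1 hγ.2)
  refine mul_le_of_le_one_right (pow_nonneg hγ.1 t) ?_
  rw [← (hD t).2]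
  exact single_le_sum (fun i _ => (hD t).1 i) (mem_univ s)

lemma visitDist_balance {S A : Type*} [Fintype S] [Fintype A] {P : S → A → S → ℝ} {γ : ℝ}
    (hP : IsKernel P) (hγ : γ ∈ Set.Ico (0 : ℝ) 1) {π : S → A → ℝ} (hπ : IsPolicy π)
    {μ : S → ℝ} (hμ : IsDist μ) (s' : S) :
    visitDist P γ π μ s' = (1 - γ) * μ s' + γ * markovStep P π (visitDist P γ π μ) s' := by
  have hS := summable_visit hP hγ hπ hμ
  have key : ∑' t : ℕ, γ ^ (t + 1) * ((markovStep P π)^[t + 1] μ) s' =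
      γ * ∑ s, ∑ a, P s a s' * π s a * ∑' t : ℕ, γ ^ t * ((markovStep P π)^[t] μ) s := by
    have h := hasSum_sum (s := univ) fun s _ => hasSum_sum (s := univ) fun a _ =>
      (hS s).hasSum.mul_left (P s a s' * π s a)
    rw [← (h.mul_left γ).tsum_eq]
    refine tsum_congr fun t => ?_
    rw [Function.iterate_succ_apply', markovStep, pow_succ', mul_assoc]
    simp only [mul_sum]
    refine sum_congr rfl fun s _ => sum_congr rfl fun a _ => ?_
    ring
  have hmark : markovStep P π (visitDist P γ π μ) s' = (1 - γ) *
      ∑ s, ∑ a, P s a s' * π s a * ∑' t : ℕ, γ ^ t * ((markovStep P π)^[t] μ) s := by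
    simp only [markovStep, visitDist, mul_sum]
    refine sum_congr rfl fun s _ => sum_congr rfl fun a _ => ?_
    ring
  rw [hmark, visitDist, (hS s').tsum_eq_zero_add, key]
  simp only [pow_zero, Function.iterate_zero, id]
  ring

lemma visitDist_isDist {S A : Type*} [Fintype S] [Fintype A] {P : S → A → S → ℝ} {γ : ℝ}
    (hP : IsKernel P) (hγ : γ ∈ Set.Ico (0 : ℝ) 1) {π : S → A → ℝ} (hπ : IsPolicy π)
    {μ : S → ℝ} (hμ : IsDist μ) : IsDist (visitDist P γ π μ) := by
  refine ⟨fun s => mul_nonneg (by linarith [hγ.2]) (tsum_nonneg fun t =>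
    mul_nonneg (pow_nonneg hγ.1 t) ((iterate_markovStep_isDist hP hπ hμ t).1 s)), ?_⟩
  -- Summing the balance equation over states gives `m = (1 - γ) + γ m` for the total mass `m`.
  have h : ∑ s, visitDist P γ π μ s = (1 - γ) * 1 + γ * ∑ s, visitDist P γ π μ s := by
    conv_lhs => rw [sum_congr rfl fun s _ => visitDist_balance hP hγ hπ hμ s]
    rw [sum_add_distrib, ← mul_sum, ← mul_sum, sum_markovStep hP hπ, hμ.2]
  have hne : 1 - γ ≠ 0 := by linarith [hγ.2]
  refine mul_left_cancel₀ hne ?_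
  linarith

/-- **Lipschitzness of the discounted state-visitation distribution.**
For any two policies `π, π'` and any initial state distribution `μ`,
`∥d^{π'}_μ − d^π_μ∥₁ ≤ (γ/(1−γ))·∥π' − π∥_{∞,1}`. -/
theorem visitation_distribution_lipschitz {S A : Type*} [Fintype S] [Fintype A] [Nonempty S]
    [Nonempty A] (P : S → A → S → ℝ) (r : S → A → ℝ) (γ : ℝ) (d₀ : S → ℝ)
    (hP : IsKernel P) (hr : ∀ s a, r s a ∈ Set.Icc (0 : ℝ) 1)
    (hγ : γ ∈ Set.Ico (0 : ℝ) 1) (hd₀ : IsDist d₀)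
    (π π' : S → A → ℝ) (hπ : IsPolicy π) (hπ' : IsPolicy π')
    (μ : S → ℝ) (hμ : IsDist μ) :
    normL1 (fun s => visitDist P γ π' μ s - visitDist P γ π μ s) ≤
      γ / (1 - γ) * normInfOne (fun s a => π' s a - π s a) := by
  set x := visitDist P γ π μ with hx
  set x' := visitDist P γ π' μ with hx'
  set N := normInfOne (fun s a => π' s a - π s a) with hN
  have hγ1 : 0 < 1 - γ := by linarith [hγ.2]
  have hxD : IsDist x := visitDist_isDist hP hγ hπ hμ
  have hx1 : normL1 x = 1 := by
    rw [← hxD.2]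
    exact sum_congr rfl fun s _ => abs_of_nonneg (hxD.1 s)
  have hdecomp : ∀ s, x' s - x s = γ * markovStep P π' (fun s => x' s - x s) s +
      γ * markovStep P (fun s a => π' s a - π s a) x s := by
    intro s
    have h1 : markovStep P π' (fun s => x' s - x s) s +
        markovStep P (fun s a => π' s a - π s a) x s = markovStep P π' x' s - markovStep P π x s := by
      simp only [markovStep, ← sum_add_distrib, ← sum_sub_distrib]
      refine sum_congr rfl fun s _ => sum_congr rfl fun a _ => ?_
      ring
    rw [← mul_add, h1]
    linarith [visitDist_balance hP hγ hπ hμ s, visitDist_balance hP hγ hπ' hμ s]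
  have hA : normL1 (markovStep P π' (fun s => x' s - x s)) ≤ 1 * normL1 (fun s => x' s - x s) :=
    normL1_markovStep_le hP _ _ fun s => by
      rw [sum_congr rfl fun a _ => abs_of_nonneg (hπ'.1 s a), hπ'.2]
  have hB : normL1 (markovStep P (fun s a => π' s a - π s a) x) ≤ N * normL1 x :=
    normL1_markovStep_le hP _ _ fun s =>
      le_ciSup (f := fun s => ∑ a, |π' s a - π s a|) (Set.finite_range _).bddAbove s
  have htri : normL1 (fun s => x' s - x s) ≤
      γ * normL1 (markovStep P π' (fun s => x' s - x s)) +
      γ * normL1 (markovStep P (fun s a => π' s a - π s a) x) := by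
    conv_lhs => rw [normL1, sum_congr rfl fun s _ => congrArg abs (hdecomp s)]
    rw [normL1, normL1, mul_sum, mul_sum, ← sum_add_distrib]
    refine sum_le_sum fun s _ => (abs_add_le _ _).trans_eq ?_
    rw [abs_mul, abs_mul, abs_of_nonneg hγ.1]
  rw [hx1] at hB
  rw [div_mul_eq_mul_div, le_div_iff₀ hγ1]
  nlinarith [mul_le_mul_of_nonneg_left hA hγ.1, mul_le_mul_of_nonneg_left hB hγ.1]
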